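/- Let A and B be n×n matrices with nonnegative real entries and let α > 0, β > 0 be reals. Then Tr(α^{−1}A ⊕ β^{−1}B) ≤ 1 if and only if all three of the following hold: (i) α ≥ λ := max_{k=1,…,n} (tr(A^{⊗k}))^{1/k}; (ii) β ≥ μ := max_{k=1,…,n} (tr(B^{⊗k}))^{1/k}; and (iii) β ≥ max_{k=1,…,n−1} max_{m=1,…,n−k} α^{−m/k}·(tr F_{km})^{1/k}, where F_{km} denotes the entrywise maximum, over all tuples of nonnegative integers (i_0, i_1, …, i_k) with i_0 + i_1 + ⋯ + i_k = m, of the max-times products A^{⊗i_0} ⊗ B ⊗ A^{⊗i_1} ⊗ B ⊗ ⋯ ⊗ B ⊗ A^{⊗i_k} (with exactly k factors B). -/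

import Mathlib

/-!
Expanding a max-times power of `C = α⁻¹A ⊕ β⁻¹B` by distributivity gives the entrywise maximum,
over all words of length `l` in the letters `A`, `B`, of the product of the letters scaled by
`α⁻¹ ^ a * β⁻¹ ^ b`, where `a` and `b` count the letters `A` and `B` (`scaled_word_le_mtPow`,
`exists_mtPow_le_scaled_word`). So `Tr C ≤ 1` says that every word of length between `1` and `n`
has diagonal entries at most `α ^ a * β ^ b`. The words with `b = 0` are the powers of `A`, those
with `a = 0` the powers of `B`, and those with `k` letters `B` and `m` letters `A` are exactly the
products whose maximum is `F_{km}` (`exists_word_eq_mtChain`, `exists_mtChain_eq_word`). Sorting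
the words into these three kinds turns the one family of inequalities into the three conditions,
up to taking `k`-th roots.
-/

open scoped BigOperators

/-- Max-times matrix product: `(A ⊗ B) i j = max_k A i k * B k j`. -/
noncomputable def mtMul {n : ℕ} (A B : Matrix (Fin n) (Fin n) ℝ) : Matrix (Fin n) (Fin n) ℝ :=
  fun i j => ⨆ k, A i k * B k j

/-- Max-times matrix power, with `A^{⊗0}` the identity matrix. -/
noncomputable def mtPow {n : ℕ} (A : Matrix (Fin n) (Fin n) ℝ) : ℕ → Matrix (Fin n) (Fin n) ℝ
  | 0 => 1
  | k + 1 => mtMul A (mtPow A k)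

/-- Tropical trace: `tr A = max_i A i i`. -/
noncomputable def mtTrace {n : ℕ} (A : Matrix (Fin n) (Fin n) ℝ) : ℝ :=
  ⨆ i, A i i

/-- The function `Tr(A) = max_{k=1,…,n} tr(A^{⊗k})`. -/
noncomputable def mtTr {n : ℕ} (A : Matrix (Fin n) (Fin n) ℝ) : ℝ :=
  ⨆ k ∈ Finset.Icc 1 n, mtTrace (mtPow A k)

/-- Kleene star: entrywise maximum of `I, A, A^{⊗2}, …, A^{⊗(n-1)}`. -/
noncomputable def mtStar {n : ℕ} (A : Matrix (Fin n) (Fin n) ℝ) : Matrix (Fin n) (Fin n) ℝ :=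
  fun i j => ⨆ k ∈ Finset.range n, mtPow A k i j

/-- Max-times matrix-vector product: `(A ⊗ x) i = max_j A i j * x j`. -/
noncomputable def mtVec {n : ℕ} (A : Matrix (Fin n) (Fin n) ℝ) (x : Fin n → ℝ) : Fin n → ℝ :=
  fun i => ⨆ j, A i j * x j

/-- The alternating product `A^{⊗v 0} ⊗ B ⊗ A^{⊗v 1} ⊗ B ⊗ ⋯ ⊗ B ⊗ A^{⊗v k}`
(with exactly `k` factors `B`). -/
noncomputable def mtChain {n : ℕ} (A B : Matrix (Fin n) (Fin n) ℝ) :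
    (k : ℕ) → (Fin (k + 1) → ℕ) → Matrix (Fin n) (Fin n) ℝ
  | 0, v => mtPow A (v 0)
  | k + 1, v => mtMul (mtPow A (v 0)) (mtMul B (mtChain A B k fun t => v t.succ))

/-- `F_{km}`: the entrywise maximum, over all tuples `(i_0,…,i_k)` of nonnegative integers
with `i_0 + ⋯ + i_k = m`, of the products `A^{⊗i_0} ⊗ B ⊗ A^{⊗i_1} ⊗ ⋯ ⊗ B ⊗ A^{⊗i_k}`. -/
noncomputable def mtF {n : ℕ} (A B : Matrix (Fin n) (Fin n) ℝ) (k m : ℕ) :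
    Matrix (Fin n) (Fin n) ℝ :=
  fun i j => ⨆ v : { v : Fin (k + 1) → ℕ // ∑ t, v t = m }, mtChain A B k v.1 i j

/-- `h^− M g = max_{i,j} M i j * g j / h i`. -/
noncomputable def mtHMG {n : ℕ} (h : Fin n → ℝ) (M : Matrix (Fin n) (Fin n) ℝ)
    (g : Fin n → ℝ) : ℝ :=
  ⨆ i, ⨆ j, M i j * g j / h i

/-- Max-times spectral radius `λ = max_{k=1,…,n} (tr(A^{⊗k}))^{1/k}`. -/
noncomputable def mtSpecR {n : ℕ} (A : Matrix (Fin n) (Fin n) ℝ) : ℝ :=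
  ⨆ k ∈ Finset.Icc 1 n, (mtTrace (mtPow A k)) ^ (1 / (k : ℝ))

/-- `γ = max_{k=1,…,n-1} (h^− A^{⊗k} g)^{1/k}`. -/
noncomputable def mtBnd {n : ℕ} (h : Fin n → ℝ) (A : Matrix (Fin n) (Fin n) ℝ)
    (g : Fin n → ℝ) : ℝ :=
  ⨆ k ∈ Finset.Icc 1 (n - 1), (mtHMG h (mtPow A k) g) ^ (1 / (k : ℝ))

/-- The function `G`. -/
noncomputable def mtG {n : ℕ} (A B : Matrix (Fin n) (Fin n) ℝ) (h g : Fin n → ℝ)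
    (s : ℝ) : ℝ :=
  max (⨆ k ∈ Finset.Icc 1 (n - 1), ⨆ m ∈ Finset.Icc 1 (n - k),
        s ^ (-(m : ℝ) / (k : ℝ)) * (mtTrace (mtF A B k m)) ^ (1 / (k : ℝ)))
      (⨆ k ∈ Finset.Icc 1 (n - 2), ⨆ m ∈ Finset.Icc 1 (n - k - 1),
        s ^ (-(m : ℝ) / (k : ℝ)) * (mtHMG h (mtF A B k m) g) ^ (1 / (k : ℝ)))

/-- The function `H`. -/
noncomputable def mtH {n : ℕ} (A B : Matrix (Fin n) (Fin n) ℝ) (h g : Fin n → ℝ)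
    (t : ℝ) : ℝ :=
  max (⨆ k ∈ Finset.Icc 1 (n - 1), ⨆ m ∈ Finset.Icc 1 (n - k),
        t ^ (-(k : ℝ) / (m : ℝ)) * (mtTrace (mtF A B k m)) ^ (1 / (m : ℝ)))
      (⨆ k ∈ Finset.Icc 1 (n - 2), ⨆ m ∈ Finset.Icc 1 (n - k - 1),
        t ^ (-(k : ℝ) / (m : ℝ)) * (mtHMG h (mtF A B k m) g) ^ (1 / (m : ℝ)))


/-! ### Finite suprema and the max-times product -/

lemma biSup_le_iff_of_nonneg (s : Finset ℕ) (f : ℕ → ℝ) {c : ℝ} (hc : 0 ≤ c) :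
    (⨆ k ∈ s, f k) ≤ c ↔ ∀ k ∈ s, f k ≤ c := by
  constructor
  · intro h k hk
    have hb : BddAbove (Set.range fun k => ⨆ _ : k ∈ s, f k) := by
      -- outside `s` the inner supremum is over the empty type, hence `0`
      have hfin : (Set.range fun k => ⨆ _ : k ∈ s, f k) ⊆ insert 0 (f '' (s : Set ℕ)) := by
        rintro _ ⟨k, rfl⟩
        by_cases hk : k ∈ s
        · exact Or.inr ⟨k, hk, by simp [hk]⟩
        · exact Or.inl (by simp [hk])
      exact (((s.finite_toSet.image f).insert 0).subset hfin).bddAbove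
    have := le_ciSup hb k
    simp only [hk, ciSup_unique] at this
    exact this.trans h
  · intro h
    exact Real.iSup_le (fun k => Real.iSup_le (fun hk => h k hk) hc) hc

lemma le_iSup_of_finite {ι : Type*} [Finite ι] (f : ι → ℝ) (i : ι) : f i ≤ ⨆ i, f i :=
  le_ciSup (Set.finite_range f).bddAbove i

lemma mtTrace_le_iff {n : ℕ} (M : Matrix (Fin n) (Fin n) ℝ) {c : ℝ} (hc : 0 ≤ c) :
    mtTrace M ≤ c ↔ ∀ i, M i i ≤ c :=
  ⟨fun h i => (le_iSup_of_finite (fun i => M i i) i).trans h, fun h => Real.iSup_le h hc⟩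

lemma mtTrace_nonneg {n : ℕ} (M : Matrix (Fin n) (Fin n) ℝ) (h : ∀ i j, 0 ≤ M i j) :
    0 ≤ mtTrace M := Real.iSup_nonneg fun i => h i i

lemma le_mtMul {n : ℕ} (A B : Matrix (Fin n) (Fin n) ℝ) (i k j : Fin n) :
    A i k * B k j ≤ mtMul A B i j := le_iSup_of_finite (fun k => A i k * B k j) k

lemma exists_mtMul_eq {n : ℕ} (A B : Matrix (Fin n) (Fin n) ℝ) (i j : Fin n) :
    ∃ k, mtMul A B i j = A i k * B k j := by
  have : Nonempty (Fin n) := ⟨i⟩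
  obtain ⟨k, hk⟩ := exists_eq_ciSup_of_finite (f := fun k => A i k * B k j)
  exact ⟨k, hk.symm⟩

lemma mtMul_nonneg {n : ℕ} {A B : Matrix (Fin n) (Fin n) ℝ} (hA : ∀ i j, 0 ≤ A i j)
    (hB : ∀ i j, 0 ≤ B i j) (i j : Fin n) : 0 ≤ mtMul A B i j :=
  Real.iSup_nonneg fun k => mul_nonneg (hA i k) (hB k j)

lemma one_entry_nonneg {n : ℕ} (i j : Fin n) : 0 ≤ (1 : Matrix (Fin n) (Fin n) ℝ) i j := by
  rw [Matrix.one_apply]; split_ifs <;> norm_num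

lemma mtPow_nonneg {n : ℕ} {A : Matrix (Fin n) (Fin n) ℝ} (hA : ∀ i j, 0 ≤ A i j) (k : ℕ) :
    ∀ i j, 0 ≤ mtPow A k i j := by
  induction k with
  | zero => exact one_entry_nonneg
  | succ k ih => exact mtMul_nonneg hA ih

lemma one_mtMul {n : ℕ} {X : Matrix (Fin n) (Fin n) ℝ} (hX : ∀ i j, 0 ≤ X i j) :
    mtMul 1 X = X := by
  ext i j
  apply le_antisymm
  · obtain ⟨k, hk⟩ := exists_mtMul_eq 1 X i j
    rw [hk, Matrix.one_apply]
    split_ifs with h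
    · simp [h]
    · simpa using hX i j
  · simpa using le_mtMul 1 X i i j

lemma mtMul_assoc {n : ℕ} {A B C : Matrix (Fin n) (Fin n) ℝ} (hA : ∀ i j, 0 ≤ A i j)
    (hC : ∀ i j, 0 ≤ C i j) : mtMul (mtMul A B) C = mtMul A (mtMul B C) := by
  ext i j
  apply le_antisymm
  · obtain ⟨k, hk⟩ := exists_mtMul_eq (mtMul A B) C i j
    obtain ⟨l, hl⟩ := exists_mtMul_eq A B i k
    rw [hk, hl, mul_assoc]
    exact (mul_le_mul_of_nonneg_left (le_mtMul B C l k j) (hA i l)).trans (le_mtMul _ _ i l j)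
  · obtain ⟨k, hk⟩ := exists_mtMul_eq A (mtMul B C) i j
    obtain ⟨l, hl⟩ := exists_mtMul_eq B C k j
    rw [hk, hl, ← mul_assoc]
    exact (mul_le_mul_of_nonneg_right (le_mtMul A B i k l) (hC l j)).trans (le_mtMul _ _ i l j)

/-! ### Words in two matrices -/

/-- The max-times product spelled by a word: `true` stands for the letter `A` and `false` for the
letter `B`. -/
noncomputable def mtWord {n : ℕ} (A B : Matrix (Fin n) (Fin n) ℝ) :
    List Bool → Matrix (Fin n) (Fin n) ℝ
  | [] => 1
  | b :: w => mtMul (if b then A else B) (mtWord A B w)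

section Words

variable {n : ℕ} {A B : Matrix (Fin n) (Fin n) ℝ}

lemma mtWord_nonneg (hA : ∀ i j, 0 ≤ A i j) (hB : ∀ i j, 0 ≤ B i j) (w : List Bool) :
    ∀ i j, 0 ≤ mtWord A B w i j := by
  induction w with
  | nil => exact one_entry_nonneg
  | cons b w ih => cases b <;> exact mtMul_nonneg (by assumption) ih

lemma mtWord_replicate_true (a : ℕ) : mtWord A B (List.replicate a true) = mtPow A a := by
  induction a with
  | zero => rfl
  | succ a ih => simp [List.replicate_succ, mtWord, mtPow, ih]

lemma mtWord_replicate_false (a : ℕ) : mtWord A B (List.replicate a false) = mtPow B a := by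
  induction a with
  | zero => rfl
  | succ a ih => simp [List.replicate_succ, mtWord, mtPow, ih]

lemma mtWord_replicate_true_append (hA : ∀ i j, 0 ≤ A i j) (hB : ∀ i j, 0 ≤ B i j) (a : ℕ)
    (w : List Bool) :
    mtWord A B (List.replicate a true ++ w) = mtMul (mtPow A a) (mtWord A B w) := by
  induction a with
  | zero => simp [mtPow, one_mtMul (mtWord_nonneg hA hB w)]
  | succ a ih =>
    simp [List.replicate_succ, mtWord, mtPow, ih, mtMul_assoc hA (mtWord_nonneg hA hB w)]

lemma exists_word_eq_mtChain (hA : ∀ i j, 0 ≤ A i j) (hB : ∀ i j, 0 ≤ B i j) (k : ℕ) :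
    ∀ v : Fin (k + 1) → ℕ, ∃ w : List Bool, w.count false = k ∧ w.count true = ∑ t, v t ∧
      mtWord A B w = mtChain A B k v := by
  induction k with
  | zero =>
    intro v
    exact ⟨List.replicate (v 0) true, by simp [List.count_replicate], by simp,
      mtWord_replicate_true _⟩
  | succ k ih =>
    intro v
    obtain ⟨w, h1, h2, h3⟩ := ih fun t => v t.succ
    refine ⟨List.replicate (v 0) true ++ false :: w, ?_, ?_, ?_⟩
    · simp [List.count_replicate, h1]
    · rw [Fin.sum_univ_succ, ← h2]
      simp
    · rw [mtWord_replicate_true_append hA hB, mtChain, ← h3]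
      simp [mtWord]

lemma mtChain_nonneg (hA : ∀ i j, 0 ≤ A i j) (hB : ∀ i j, 0 ≤ B i j) (k : ℕ)
    (v : Fin (k + 1) → ℕ) (i j : Fin n) : 0 ≤ mtChain A B k v i j := by
  obtain ⟨w, -, -, h⟩ := exists_word_eq_mtChain hA hB k v
  exact h ▸ mtWord_nonneg hA hB w i j

/-- Raising the leading exponent of an alternating product by one multiplies it by `A`. -/
lemma mtChain_cons_succ (hA : ∀ i j, 0 ≤ A i j) (hB : ∀ i j, 0 ≤ B i j) (k : ℕ)
    (v : Fin (k + 1) → ℕ) :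
    mtChain A B k (Fin.cons (v 0 + 1) fun t => v t.succ) = mtMul A (mtChain A B k v) := by
  cases k with
  | zero => rfl
  | succ k =>
    have h := mtMul_nonneg hB (mtChain_nonneg hA hB k fun t => v t.succ)
    simp only [mtChain, Fin.cons_zero, Fin.cons_succ, mtPow]
    exact mtMul_assoc hA h

lemma exists_mtChain_eq_word (hA : ∀ i j, 0 ≤ A i j) (hB : ∀ i j, 0 ≤ B i j) (w : List Bool) :
    ∀ k, w.count false = k → ∃ v : Fin (k + 1) → ℕ, ∑ t, v t = w.count true ∧
      mtChain A B k v = mtWord A B w := by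
  induction w with
  | nil =>
    rintro k rfl
    exact ⟨fun _ => 0, by simp, rfl⟩
  | cons b w ih =>
    intro k hk
    cases b with
    | true =>
      rw [List.count_cons_of_ne (by decide)] at hk
      obtain ⟨v, h1, h2⟩ := ih k hk
      rw [List.count_cons_self]
      refine ⟨Fin.cons (v 0 + 1) fun t => v t.succ, ?_, ?_⟩
      · rw [Fin.sum_univ_succ] at h1 ⊢
        simp only [Fin.cons_zero, Fin.cons_succ]
        omega
      · rw [mtChain_cons_succ hA hB, h2]
        simp [mtWord]
    | false =>
      rw [List.count_cons_self] at hk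
      subst hk
      obtain ⟨v, h1, h2⟩ := ih _ rfl
      rw [List.count_cons_of_ne (by decide)]
      refine ⟨Fin.cons 0 v, ?_, ?_⟩
      · rw [Fin.sum_univ_succ]
        simpa using h1
      · simp only [mtChain, Fin.cons_zero, Fin.cons_succ, h2, mtPow]
        rw [one_mtMul (mtMul_nonneg hB (mtWord_nonneg hA hB w))]
        simp [mtWord]

/-! ### The matrices `F_{km}` as maxima over words -/

lemma finite_tuples (k m : ℕ) : Finite { v : Fin (k + 1) → ℕ // ∑ t, v t = m } := by
  refine Set.Finite.to_subtype ((Set.Finite.pi' fun _ : Fin (k + 1) => Set.finite_Iic m).subset ?_)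
  intro v hv t
  have hv : ∑ t, v t = m := hv
  exact hv ▸ Finset.single_le_sum (f := v) (fun _ _ => Nat.zero_le _) (Finset.mem_univ t)

lemma mtF_nonneg (hA : ∀ i j, 0 ≤ A i j) (hB : ∀ i j, 0 ≤ B i j) (k m : ℕ) (i j : Fin n) :
    0 ≤ mtF A B k m i j := Real.iSup_nonneg fun v => mtChain_nonneg hA hB k v.1 i j

/-- `F_{km}` is the entrywise maximum of the words with `k` letters `B` and `m` letters `A`. -/
lemma mtF_le_iff (hA : ∀ i j, 0 ≤ A i j) (hB : ∀ i j, 0 ≤ B i j) (k m : ℕ) (i j : Fin n)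
    {c : ℝ} (hc : 0 ≤ c) :
    mtF A B k m i j ≤ c ↔
      ∀ w : List Bool, w.count false = k → w.count true = m → mtWord A B w i j ≤ c := by
  constructor
  · intro h w hk hm
    obtain ⟨v, h1, h2⟩ := exists_mtChain_eq_word hA hB w k hk
    have := finite_tuples k m
    rw [← h2]
    exact (le_iSup_of_finite (fun v : { v : Fin (k + 1) → ℕ // ∑ t, v t = m } =>
      mtChain A B k v.1 i j) ⟨v, h1.trans hm⟩).trans h
  · intro h
    refine Real.iSup_le (fun v => ?_) hc
    obtain ⟨w, h1, h2, h3⟩ := exists_word_eq_mtChain hA hB k v.1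
    rw [← h3]
    exact h w h1 (h2.trans v.2)

/-! ### Powers of the scaled sum as maxima over words -/

variable {α β : ℝ}

lemma scaled_word_le_mtPow (hA : ∀ i j, 0 ≤ A i j) (hB : ∀ i j, 0 ≤ B i j) (hα : 0 < α)
    (hβ : 0 < β) (w : List Bool) : ∀ i j : Fin n,
    α⁻¹ ^ w.count true * β⁻¹ ^ w.count false * mtWord A B w i j ≤
      mtPow (fun i j => max (α⁻¹ * A i j) (β⁻¹ * B i j)) w.length i j := by
  induction w with
  | nil => intro i j; simp [mtWord, mtPow]
  | cons b w ih =>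
    intro i j
    obtain ⟨k, hk⟩ := exists_mtMul_eq (if b then A else B) (mtWord A B w) i j
    have hC : 0 ≤ max (α⁻¹ * A i k) (β⁻¹ * B i k) :=
      le_max_of_le_left (mul_nonneg (inv_pos.2 hα).le (hA i k))
    have hW := mtWord_nonneg hA hB w k j
    refine le_trans ?_ (le_mtMul _ _ i k j)
    refine le_trans ?_ (mul_le_mul_of_nonneg_left (ih k j) hC)
    rw [mtWord, hk]
    have hs : 0 ≤ α⁻¹ ^ w.count true * β⁻¹ ^ w.count false * mtWord A B w k j := by positivity
    cases b with
    | true =>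
      refine le_trans (le_of_eq ?_) (mul_le_mul_of_nonneg_right (le_max_left _ _) hs)
      simp [pow_succ]; ring
    | false =>
      refine le_trans (le_of_eq ?_) (mul_le_mul_of_nonneg_right (le_max_right _ _) hs)
      simp [pow_succ]; ring

lemma exists_mtPow_le_scaled_word (hA : ∀ i j, 0 ≤ A i j) (hα : 0 < α)
    (hβ : 0 < β) (l : ℕ) : ∀ i j : Fin n, ∃ w : List Bool, w.length = l ∧
    mtPow (fun i j => max (α⁻¹ * A i j) (β⁻¹ * B i j)) l i j ≤
      α⁻¹ ^ w.count true * β⁻¹ ^ w.count false * mtWord A B w i j := by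
  induction l with
  | zero => intro i j; exact ⟨[], rfl, by simp [mtWord, mtPow]⟩
  | succ l ih =>
    intro i j
    obtain ⟨k, hk⟩ := exists_mtMul_eq (fun i j => max (α⁻¹ * A i j) (β⁻¹ * B i j))
      (mtPow (fun i j => max (α⁻¹ * A i j) (β⁻¹ * B i j)) l) i j
    obtain ⟨w, hl, hw⟩ := ih k j
    have hC : 0 ≤ max (α⁻¹ * A i k) (β⁻¹ * B i k) :=
      le_max_of_le_left (mul_nonneg (inv_pos.2 hα).le (hA i k))
    simp only [mtPow, hk]
    -- the letter prepended to `w` is the one attaining the maximum in the entry `(i, k)`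
    rcases max_choice (α⁻¹ * A i k) (β⁻¹ * B i k) with h | h
    · refine ⟨true :: w, by simp [hl], (mul_le_mul_of_nonneg_left hw hC).trans ?_⟩
      have := mul_le_mul_of_nonneg_left (le_mtMul A (mtWord A B w) i k j)
        (show 0 ≤ α⁻¹ ^ (w.count true + 1) * β⁻¹ ^ w.count false by positivity)
      rw [h]
      refine le_trans (le_of_eq ?_) (this.trans (le_of_eq ?_))
      · ring
      · simp [mtWord]
    · refine ⟨false :: w, by simp [hl], (mul_le_mul_of_nonneg_left hw hC).trans ?_⟩
      have := mul_le_mul_of_nonneg_left (le_mtMul B (mtWord A B w) i k j)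
        (show 0 ≤ α⁻¹ ^ w.count true * β⁻¹ ^ (w.count false + 1) by positivity)
      rw [h]
      refine le_trans (le_of_eq ?_) (this.trans (le_of_eq ?_))
      · ring
      · simp [mtWord]

lemma mtTr_le_one_iff_words (hA : ∀ i j, 0 ≤ A i j) (hB : ∀ i j, 0 ≤ B i j) (hα : 0 < α)
    (hβ : 0 < β) :
    mtTr (fun i j => max (α⁻¹ * A i j) (β⁻¹ * B i j)) ≤ 1 ↔
      ∀ w : List Bool, w.length ∈ Finset.Icc 1 n →
        ∀ i, mtWord A B w i i ≤ α ^ w.count true * β ^ w.count false := by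
  have hscale : ∀ (w : List Bool) (i : Fin n),
      α⁻¹ ^ w.count true * β⁻¹ ^ w.count false * mtWord A B w i i ≤ 1 ↔
        mtWord A B w i i ≤ α ^ w.count true * β ^ w.count false := by
    intro w i
    rw [inv_pow, inv_pow, ← mul_inv, inv_mul_le_iff₀ (by positivity), mul_one]
  unfold mtTr
  rw [biSup_le_iff_of_nonneg _ _ zero_le_one]
  constructor
  · intro h w hw i
    rw [← hscale]
    exact (scaled_word_le_mtPow hA hB hα hβ w i i).trans
      ((mtTrace_le_iff _ zero_le_one).1 (h _ hw) i)
  · intro h l hl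
    rw [mtTrace_le_iff _ zero_le_one]
    intro i
    obtain ⟨w, rfl, hw⟩ := exists_mtPow_le_scaled_word (B := B) hA hα hβ l i i
    exact hw.trans ((hscale w i).2 (h w hl i))

end Words

/-! ### Roots and the three conditions -/

lemma root_le_iff {x a : ℝ} (hx : 0 ≤ x) (ha : 0 ≤ a) {k : ℕ} (hk : 1 ≤ k) :
    x ^ (1 / (k : ℝ)) ≤ a ↔ x ≤ a ^ k := by
  have hk' : (0 : ℝ) < k := by exact_mod_cast hk
  rw [one_div, Real.rpow_inv_le_iff_of_pos hx ha hk', Real.rpow_natCast]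

lemma scaled_root_le_iff {x α β : ℝ} (hx : 0 ≤ x) (hα : 0 < α) (hβ : 0 < β) {k : ℕ}
    (hk : 1 ≤ k) (m : ℕ) :
    α ^ (-(m : ℝ) / (k : ℝ)) * x ^ (1 / (k : ℝ)) ≤ β ↔ x ≤ α ^ m * β ^ k := by
  have h : α ^ (-(m : ℝ) / (k : ℝ)) * x ^ (1 / (k : ℝ)) = ((α ^ m)⁻¹ * x) ^ (1 / (k : ℝ)) := by
    rw [Real.mul_rpow (by positivity) hx, ← Real.rpow_natCast, ← Real.rpow_neg hα.le,
      ← Real.rpow_mul hα.le]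
    congr 2; ring
  rw [h, root_le_iff (by positivity) hβ.le hk, inv_mul_le_iff₀ (by positivity)]

lemma mtSpecR_le_iff {n : ℕ} {A : Matrix (Fin n) (Fin n) ℝ} (hA : ∀ i j, 0 ≤ A i j) {α : ℝ}
    (hα : 0 < α) :
    mtSpecR A ≤ α ↔ ∀ k ∈ Finset.Icc 1 n, ∀ i, mtPow A k i i ≤ α ^ k := by
  rw [mtSpecR, biSup_le_iff_of_nonneg _ _ hα.le]
  refine forall₂_congr fun k hk => ?_
  rw [root_le_iff (mtTrace_nonneg _ (mtPow_nonneg hA k)) hα.le (Finset.mem_Icc.1 hk).1,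
    mtTrace_le_iff _ (by positivity)]

/-- `Tr(α⁻¹A ⊕ β⁻¹B) ≤ 1` iff `α ≥ λ`, `β ≥ μ` and
`β ≥ max_{k,m} α^{−m/k} (tr F_{km})^{1/k}`. -/
theorem Tr_scaled_sum_le_one_iff {n : ℕ} (A B : Matrix (Fin n) (Fin n) ℝ)
    (hA : ∀ i j, 0 ≤ A i j) (hB : ∀ i j, 0 ≤ B i j)
    (α β : ℝ) (hα : 0 < α) (hβ : 0 < β) :
    mtTr (fun i j => max (α⁻¹ * A i j) (β⁻¹ * B i j)) ≤ 1 ↔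
      (mtSpecR A ≤ α ∧ mtSpecR B ≤ β ∧
        (⨆ k ∈ Finset.Icc 1 (n - 1), ⨆ m ∈ Finset.Icc 1 (n - k),
          α ^ (-(m : ℝ) / (k : ℝ)) * (mtTrace (mtF A B k m)) ^ (1 / (k : ℝ))) ≤ β) := by
  have hthird : (⨆ k ∈ Finset.Icc 1 (n - 1), ⨆ m ∈ Finset.Icc 1 (n - k),
        α ^ (-(m : ℝ) / (k : ℝ)) * (mtTrace (mtF A B k m)) ^ (1 / (k : ℝ))) ≤ β ↔
      ∀ k ∈ Finset.Icc 1 (n - 1), ∀ m ∈ Finset.Icc 1 (n - k), ∀ (i : Fin n) (w : List Bool),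
        w.count false = k → w.count true = m → mtWord A B w i i ≤ α ^ m * β ^ k := by
    rw [biSup_le_iff_of_nonneg _ _ hβ.le]
    refine forall₂_congr fun k hk => ?_
    rw [biSup_le_iff_of_nonneg _ _ hβ.le]
    refine forall₂_congr fun m _ => ?_
    rw [scaled_root_le_iff (mtTrace_nonneg _ (mtF_nonneg hA hB k m)) hα hβ
      (Finset.mem_Icc.1 hk).1, mtTrace_le_iff _ (by positivity)]
    exact forall_congr' fun i => mtF_le_iff hA hB k m i i (by positivity)
  rw [mtTr_le_one_iff_words hA hB hα hβ, mtSpecR_le_iff hA hα, mtSpecR_le_iff hB hβ, hthird]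
  constructor
  · intro h
    refine ⟨fun k hk i => ?_, fun k hk i => ?_, fun k hk m hm i w hwk hwm => ?_⟩
    · simpa [mtWord_replicate_true, List.count_replicate] using
        h (List.replicate k true) (by simpa using hk) i
    · simpa [mtWord_replicate_false, List.count_replicate] using
        h (List.replicate k false) (by simpa using hk) i
    · have hlen := List.count_true_add_count_false w
      have := h w (by simp only [Finset.mem_Icc] at *; omega) i
      rwa [hwk, hwm] at this
  · rintro ⟨h1, h2, h3⟩ w hw i
    have hlen := List.count_true_add_count_false w
    rcases Nat.eq_zero_or_pos (w.count false) with h0 | hpos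
    · have hw' : w = List.replicate w.length true :=
        List.eq_replicate_length.2 fun b hb => by
          cases b with
          | true => rfl
          | false => exact absurd hb (List.count_eq_zero.1 h0)
      have := h1 _ hw i
      rw [← mtWord_replicate_true (B := B), ← hw'] at this
      rwa [h0, pow_zero, mul_one, show w.count true = w.length by omega]
    rcases Nat.eq_zero_or_pos (w.count true) with h0 | hpos'
    · have hw' : w = List.replicate w.length false :=
        List.eq_replicate_length.2 fun b hb => by
          cases b with
          | false => rfl
          | true => exact absurd hb (List.count_eq_zero.1 h0)
      have := h2 _ hw i
      rw [← mtWord_replicate_false (A := A), ← hw'] at this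
      rwa [h0, pow_zero, one_mul, show w.count false = w.length by omega]
    · exact h3 _ (by simp only [Finset.mem_Icc] at *; omega) _
        (by simp only [Finset.mem_Icc] at *; omega) i w rfl rfl
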